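/- arXiv:2112.02761 — 2 statements merged into one kernel-verified Lean document; each statement's English description precedes it below -/
import Mathlib

section
/- Let d ≥ 2, let σ be a permutation of {1,…,d} with permutation matrix P ∈ ℝ^{d×d} (P_{ij} = 1 if i = σ(j), else 0), let s_1,…,s_d > 0 and Σ = diag(s_1²,…,s_d²), and let ν > 0. For l ∈ ℝ^{d(d−1)/2} let L(l) ∈ ℝ^{d×d} be the strictly lower-triangular matrix whose (i,j) entries for j < i are the components of l, and set Θ(l) = (I − P L(l) Pᵀ)ᵀ Σ^{−1} (I − P L(l) Pᵀ). Let G ∈ ℝ^{d×d} be the strictly lower-triangular all-ones matrix (G_{ij} = 1 iff j < i), and for x ∈ ℝ^d let D = diag(P G Pᵀ (x ∘ x)) where x ∘ x is the entrywise square. Let D′ and Σ′ ∈ ℝ^{(d−1)×(d−1)} be obtained from D and Σ by deleting the row and column with index σ(1), and let S ∈ ℝ^{d×d} be diagonal with S_{jj} = ν² D_{jj} / (s_j² (s_j² + ν² D_{jj})). Then for every x ∈ ℝ^d all of whose coordinates are nonzero, ∫_{ℝ^{d(d−1)/2}} (2π)^{−d/2} √(det Θ(l)) · exp(−½ xᵀ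 Θ(l) x) · (2πν²)^{−d(d−1)/4} exp(−‖l‖²/(2ν²)) dl = (2π)^{−d/2} (∏_{j=1}^d s_j)^{−1} ν^{−(d−1)} (det D′)^{−1/2} (det(Σ′^{−1} + ν^{−2} D′^{−1}))^{−1/2} exp(−½ xᵀ Σ^{−1} x + ½ xᵀ S x). (This is Theorem 1 of the paper: the Gaussian prior on the edge weights l of a linear-Gaussian SEM can be analytically marginalized, yielding this closed-form marginal likelihood p(x | P, Σ, ν).) -/
open Matrix MeasureTheory Real Finset

noncomputable def gg (V y : ℝ) : ℝ := (Real.sqrt V)⁻¹ * Real.exp (-(y^2 / (2*V)))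

lemma gg_one (T ν a y : ℝ) (hT : 0 < T) (hν : 0 < ν) :
    ∫ u : ℝ, gg T (y - a*u) * Real.exp (-(u^2/(2*ν^2))) = Real.sqrt (2*π*ν^2) * gg (T+ν^2*a^2) y := by
  have hV : 0 < T + ν^2*a^2 := by positivity
  set V := T + ν^2*a^2 with hVd
  have h1 : ∀ u : ℝ, gg T (y - a*u) * Real.exp (-(u^2/(2*ν^2))) =
      ((Real.sqrt T)⁻¹ * Real.exp (-(y^2/(2*V)))) *
        Real.exp (-(V/(2*T*ν^2)) * (u - ν^2*a*y/V)^2) := by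
    intro u
    unfold gg
    rw [mul_assoc, mul_assoc, ← Real.exp_add, ← Real.exp_add]
    congr 2
    field_simp
    rw [hVd]
    ring
  simp_rw [h1]
  rw [integral_const_mul, integral_sub_right_eq_self (fun u => Real.exp (-(V/(2*T*ν^2)) * u^2)), integral_gaussian]
  unfold gg
  have : π / (V/(2*T*ν^2)) = (2*π*ν^2) * T / V := by field_simp
  rw [this, Real.sqrt_div (by positivity), Real.sqrt_mul (by positivity)]
  have : 0 < Real.sqrt T := Real.sqrt_pos.2 hT
  field_simp

lemma gg_cont (V : ℝ) : Continuous (gg V) := by unfold gg; fun_prop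

lemma gg_bd (V y : ℝ) (hV : 0 < V) : ‖gg V y‖ ≤ (Real.sqrt V)⁻¹ := by
  unfold gg
  rw [Real.norm_of_nonneg (by positivity)]
  apply mul_le_of_le_one_right (by positivity)
  rw [Real.exp_le_one_iff]
  have : 0 ≤ y^2/(2*V) := by positivity
  linarith

lemma gg_int {κ ι : Type*} [Fintype κ] [Fintype ι] (T : κ → ℝ) (hT : ∀ k, 0 < T k) (ν : ℝ) (hν : 0 < ν)
    (f : κ → (ι → ℝ) → ℝ) (hf : ∀ k, Continuous (f k)) :
    Integrable (fun l : ι → ℝ => (∏ k, gg (T k) (f k l)) * Real.exp (-(∑ p, (l p)^2)/(2*ν^2))) := by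
  have h0 : Integrable (fun l : ι → ℝ => Real.exp (-(∑ p, (l p)^2)/(2*ν^2))) := by
    have : (fun l : ι → ℝ => Real.exp (-(∑ p, (l p)^2)/(2*ν^2))) =
        fun l : ι → ℝ => ∏ p, (fun u : ℝ => Real.exp (-(1/(2*ν^2)) * u^2)) (l p) := by
      funext l
      rw [← Real.exp_sum, ← Finset.mul_sum]
      congr 1
      ring
    rw [this]
    exact Integrable.fintype_prod (f := fun _ : ι => fun u : ℝ => Real.exp (-(1/(2*ν^2)) * u^2))
      (fun _ => integrable_exp_neg_mul_sq (by positivity))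
  refine h0.bdd_mul (c := ∏ k, (Real.sqrt (T k))⁻¹) ?_ ?_
  · apply Continuous.aestronglyMeasurable
    exact continuous_finsetProd _ fun k _ => (gg_cont _).comp (hf k)
  · refine Filter.Eventually.of_forall fun l => ?_
    rw [norm_prod]
    exact Finset.prod_le_prod (fun _ _ => norm_nonneg _) fun k _ => gg_bd _ _ (hT k)

lemma gg_fin {κ : Type*} [Fintype κ] [DecidableEq κ] (ν : ℝ) (hν : 0 < ν) (T : κ → ℝ) (hT : ∀ k, 0 < T k) (n : ℕ) :
    ∀ (r : Fin n → κ) (a : Fin n → ℝ) (y : κ → ℝ),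
    ∫ l : Fin n → ℝ, (∏ k, gg (T k) (y k - ∑ p, if r p = k then a p * l p else 0)) *
        Real.exp (-(∑ p, (l p)^2)/(2*ν^2)) =
      Real.sqrt (2*π*ν^2) ^ n * ∏ k, gg (T k + ν^2 * ∑ p, if r p = k then (a p)^2 else 0) (y k) := by
  induction n with
  | zero => 
    intro r a y
    simp [integral_const, Measure.real, volume_pi]
  | succ n ih =>
    intro r a y
    have hI := gg_int (ι := Fin (n+1)) T hT ν hν
      (fun k l => y k - ∑ p, if r p = k then a p * l p else 0) (by
        intro k
        refine continuous_const.sub (continuous_finsetSum _ fun p _ => ?_)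
        split_ifs <;> fun_prop)
    have mp := (volume_preserving_piFinSuccAbove (fun _ : Fin (n+1) => ℝ) 0).symm
    rw [← mp.integral_comp (MeasurableEquiv.measurableEmbedding _)]
    rw [← mp.integrable_comp_emb (MeasurableEquiv.measurableEmbedding _)] at hI
    simp only [Function.comp_def] at hI
    rw [Measure.volume_eq_prod] at hI ⊢
    rw [integral_prod _ hI]
    simp only [MeasurableEquiv.piFinSuccAbove_symm_apply, Fin.insertNthEquiv_apply, Fin.insertNth_zero', Fin.sum_univ_succ, Fin.cons_zero, Fin.cons_succ]
    set B : κ → ℝ := fun k => T k + ν^2 * ∑ p : Fin n, if r p.succ = k then (a p.succ)^2 else 0 with hB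
    have hBp : ∀ k, 0 < B k := fun k => by
      have : 0 ≤ ∑ p : Fin n, if r p.succ = k then (a p.succ)^2 else 0 :=
        Finset.sum_nonneg fun p _ => by split_ifs <;> positivity
      have := hT k
      positivity
    have step : ∀ u : ℝ, (∫ l : Fin n → ℝ, (∏ k, gg (T k) (y k - ((if r 0 = k then a 0 * u else 0) + ∑ p : Fin n, if r p.succ = k then a p.succ * l p else 0))) *
        Real.exp (-(u^2 + ∑ p, (l p)^2)/(2*ν^2))) =
        (Real.sqrt (2*π*ν^2) ^ n * ∏ k ∈ univ.erase (r 0), gg (B k) (y k)) * (gg (B (r 0)) (y (r 0) - a 0 * u) * Real.exp (-(u^2/(2*ν^2)))) := by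
      intro u
      have := ih (fun p => r p.succ) (fun p => a p.succ) (fun k => y k - if r 0 = k then a 0 * u else 0)
      have e : ∀ l : Fin n → ℝ, Real.exp (-(u^2 + ∑ p, (l p)^2)/(2*ν^2)) = Real.exp (-(∑ p, (l p)^2)/(2*ν^2)) * Real.exp (-(u^2/(2*ν^2))) := by
        intro l
        rw [← Real.exp_add]; congr 1; ring
      simp_rw [e, ← sub_sub, ← mul_assoc]
      rw [integral_mul_const, this, ← Finset.mul_prod_erase univ _ (Finset.mem_univ (r 0))]
      have e2 : ∏ k ∈ univ.erase (r 0), gg (T k + ν^2 * ∑ p : Fin n, if r p.succ = k then (a p.succ)^2 else 0) (y k - if r 0 = k then a 0 * u else 0) = ∏ k ∈ univ.erase (r 0), gg (B k) (y k) := by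
        refine Finset.prod_congr rfl fun k hk => ?_
        rw [if_neg (Finset.ne_of_mem_erase hk).symm, sub_zero]
      rw [e2, if_pos rfl]
      ring
    simp_rw [step]
    rw [integral_const_mul, gg_one _ _ _ _ (hBp _) hν, ← Finset.mul_prod_erase univ _ (Finset.mem_univ (r 0))]
    have e3 : ∏ k ∈ univ.erase (r 0), gg (T k + ν^2 * ((if r 0 = k then (a 0)^2 else 0) + ∑ p : Fin n, if r p.succ = k then (a p.succ)^2 else 0)) (y k) = ∏ k ∈ univ.erase (r 0), gg (B k) (y k) := by
      refine Finset.prod_congr rfl fun k hk => ?_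
      rw [if_neg (Finset.ne_of_mem_erase hk).symm, zero_add]
    rw [e3, if_pos rfl, show T (r 0) + ν^2 * (a 0^2 + ∑ p : Fin n, if r p.succ = r 0 then (a p.succ)^2 else 0) = B (r 0) + ν^2 * a 0^2 by rw [hB]; ring]
    ring

lemma gg_gen {κ ι : Type*} [Fintype κ] [DecidableEq κ] [Fintype ι] (ν : ℝ) (hν : 0 < ν) (T : κ → ℝ) (hT : ∀ k, 0 < T k)
    (r : ι → κ) (a : ι → ℝ) (y : κ → ℝ) :
    ∫ l : ι → ℝ, (∏ k, gg (T k) (y k - ∑ p, if r p = k then a p * l p else 0)) *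
        Real.exp (-(∑ p, (l p)^2)/(2*ν^2)) =
      Real.sqrt (2*π*ν^2) ^ (Fintype.card ι) * ∏ k, gg (T k + ν^2 * ∑ p, if r p = k then (a p)^2 else 0) (y k) := by
  let e := (Fintype.equivFin ι).symm
  have mp := volume_measurePreserving_piCongrLeft (fun _ : ι => ℝ) e
  rw [← mp.integral_comp (MeasurableEquiv.measurableEmbedding _)]
  have := gg_fin ν hν T hT (Fintype.card ι) (fun i => r (e i)) (fun i => a (e i)) y
  have h : ∀ k, (∑ p, if r (e p) = k then (a (e p))^2 else 0) = ∑ p, if r p = k then (a p)^2 else 0 :=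
    fun k => e.sum_comp (fun p => if r p = k then (a p)^2 else 0)
  simp_rw [h] at this
  rw [← this]
  congr 1
  funext l
  have h2 : ∀ F : ι → ℝ → ℝ, (∑ p, F p ((MeasurableEquiv.piCongrLeft (fun _ : ι => ℝ) e) l p)) = ∑ p, F (e p) (l p) := by
    intro F
    rw [← e.sum_comp]
    refine Finset.sum_congr rfl fun p _ => ?_
    rw [MeasurableEquiv.piCongrLeft_apply_apply]
  rw [h2 (fun _ t => t^2)]
  congr 1
  refine Finset.prod_congr rfl fun k _ => ?_
  rw [h2 (fun p t => if r p = k then a p * t else 0)]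

lemma sum_row {d : ℕ} (k : Fin d) (F : {p : Fin d × Fin d // p.2 < p.1} → ℝ) :
    (∑ p, if p.1.1 = k then F p else 0) = ∑ j, if h : j < k then F ⟨(k,j),h⟩ else 0 := by
  have : (∑ p : {p : Fin d × Fin d // p.2 < p.1}, if p.1.1 = k then F p else 0) =
      ∑ p : Fin d × Fin d, if h : p.2 < p.1 then (if p.1 = k then F ⟨p,h⟩ else 0) else 0 := by
    rw [← Fintype.sum_subtype_add_sum_subtype (fun p : Fin d × Fin d => p.2 < p.1)]
    rw [Finset.sum_eq_zero (s := (univ : Finset {p : Fin d × Fin d // ¬ p.2 < p.1}))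
      (fun p _ => dif_neg p.2), add_zero]
    exact Finset.sum_congr rfl fun p _ => by rw [dif_pos p.2]
  rw [this, Fintype.sum_prod_type, Finset.sum_eq_single k]
  · simp
  · intro b _ hb
    simp [hb]
  · simp

lemma card_row (d : ℕ) : Fintype.card {p : Fin d × Fin d // p.2 < p.1} * 2 = d * (d-1) := by
  rw [← Finset.sum_range_id_mul_two, ← Fin.sum_univ_eq_sum_range (fun i => i)]
  congr 1
  rw [Fintype.card_subtype, Finset.card_filter, Fintype.sum_prod_type]
  refine Finset.sum_congr rfl fun i _ => ?_
  rw [← Finset.card_filter]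
  have : (univ.filter fun j : Fin d => j < i) = Finset.Iio i := by ext; simp
  rw [this]; simp

lemma inv_diag {n : Type*} [Fintype n] [DecidableEq n] (v : n → ℝ) (hv : ∀ i, v i ≠ 0) :
    (Matrix.diagonal v)⁻¹ = Matrix.diagonal fun i => (v i)⁻¹ := by
  apply Matrix.inv_eq_right_inv
  rw [Matrix.diagonal_mul_diagonal, ← Matrix.diagonal_one]
  congr 1
  funext i
  exact mul_inv_cancel₀ (hv i)

lemma perm_conj {d : ℕ} (σ : Equiv.Perm (Fin d)) (P M : Matrix (Fin d) (Fin d) ℝ)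
    (hP : ∀ i j, P i j = if i = σ j then 1 else 0) :
    P * M * Pᵀ = M.submatrix σ.symm σ.symm := by
  ext i j
  have h : ∀ i j, P i j = if σ.symm i = j then 1 else 0 := by
    intro i j
    rw [hP]
    simp only [Equiv.symm_apply_eq]
  simp [Matrix.mul_apply, h]

lemma quad_diag {n : Type*} [Fintype n] [DecidableEq n] (v x : n → ℝ) :
    x ⬝ᵥ (Matrix.diagonal v *ᵥ x) = ∑ j, v j * x j ^ 2 := by
  simp only [dotProduct, Matrix.mulVec_diagonal]
  exact Finset.sum_congr rfl fun j _ => by ring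

lemma quad_conj {n : Type*} [Fintype n] [DecidableEq n] (A : Matrix n n ℝ) (v x : n → ℝ) :
    x ⬝ᵥ ((Aᵀ * Matrix.diagonal v * A) *ᵥ x) = ∑ j, v j * ((A *ᵥ x) j) ^ 2 := by
  rw [← quad_diag, ← Matrix.mulVec_mulVec, ← Matrix.mulVec_mulVec, Matrix.dotProduct_mulVec,
    Matrix.vecMul_transpose]

lemma prod_gg {n : Type*} [Fintype n] (V y : n → ℝ) :
    ∏ k, gg (V k) (y k) = (∏ k, (Real.sqrt (V k))⁻¹) * Real.exp (-(1/2) * ∑ k, (V k)⁻¹ * y k ^ 2) := by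
  unfold gg
  rw [Finset.prod_mul_distrib, ← Real.exp_sum, Finset.mul_sum]
  congr 2
  refine Finset.sum_congr rfl fun k _ => ?_
  rw [div_eq_mul_inv, mul_inv]
  ring




/-- Theorem 1 of the paper: analytic marginalization of the isotropic Gaussian prior
over the edge weights `l ∈ ℝ^{d(d-1)/2}` of a linear-Gaussian SEM.  Here the
edge-weight space `ℝ^{d(d-1)/2}` is realised as the functions on the set of strictly
lower-triangular index pairs `{(i,j) : j < i}`, `L l` is the strictly
lower-triangular matrix with entries `l`, `Θ l = (I - P L Pᵀ)ᵀ Σ⁻¹ (I - P L Pᵀ)` is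
the SEM precision matrix, `G` is the strictly lower-triangular all-ones matrix,
`D = diag(P G Pᵀ (x ∘ x))`, `S` is diagonal with
`S_jj = ν² D_jj / (s_j² (s_j² + ν² D_jj))`, and `D'`, `Σ'` delete the row and column
of index `σ(1)` from `D` and `Σ`. -/
theorem stmt_0 (d : ℕ) (hd : 2 ≤ d) (σ : Equiv.Perm (Fin d))
    (P : Matrix (Fin d) (Fin d) ℝ)
    (hP : ∀ i j, P i j = if i = σ j then 1 else 0)
    (s : Fin d → ℝ) (hs : ∀ j, 0 < s j)
    (Sig : Matrix (Fin d) (Fin d) ℝ)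
    (hSig : Sig = Matrix.diagonal fun j => (s j) ^ 2)
    (ν : ℝ) (hν : 0 < ν)
    (Lf : ({p : Fin d × Fin d // p.2 < p.1} → ℝ) → Matrix (Fin d) (Fin d) ℝ)
    (hLf : ∀ l i j, Lf l i j = if h : j < i then l ⟨(i, j), h⟩ else 0)
    (Θ : ({p : Fin d × Fin d // p.2 < p.1} → ℝ) → Matrix (Fin d) (Fin d) ℝ)
    (hΘ : ∀ l, Θ l = (1 - P * Lf l * Pᵀ)ᵀ * Sig⁻¹ * (1 - P * Lf l * Pᵀ))
    (G : Matrix (Fin d) (Fin d) ℝ)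
    (hG : ∀ i j : Fin d, G i j = if j < i then 1 else 0)
    (x : Fin d → ℝ) (hx : ∀ i, x i ≠ 0)
    (D : Matrix (Fin d) (Fin d) ℝ)
    (hD : D = Matrix.diagonal ((P * G * Pᵀ) *ᵥ fun k => (x k) ^ 2))
    (S : Matrix (Fin d) (Fin d) ℝ)
    (hS : S = Matrix.diagonal fun j =>
      ν ^ 2 * D j j / ((s j) ^ 2 * ((s j) ^ 2 + ν ^ 2 * D j j)))
    (i₀ : Fin d) (hi₀ : (i₀ : ℕ) = 0)
    (D' Sig' : Matrix {j : Fin d // j ≠ σ i₀} {j : Fin d // j ≠ σ i₀} ℝ)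
    (hD' : D' = D.submatrix Subtype.val Subtype.val)
    (hSig' : Sig' = Sig.submatrix Subtype.val Subtype.val) :
    ∫ l : ({p : Fin d × Fin d // p.2 < p.1} → ℝ),
        (2 * π) ^ (-(d : ℝ) / 2) * Real.sqrt (Θ l).det *
          Real.exp (-(1 / 2) * (x ⬝ᵥ ((Θ l) *ᵥ x))) *
        ((2 * π * ν ^ 2) ^ (-((d : ℝ) * ((d : ℝ) - 1)) / 4) *
          Real.exp (-(∑ p, (l p) ^ 2) / (2 * ν ^ 2)))
      = (2 * π) ^ (-(d : ℝ) / 2) * (∏ j, s j)⁻¹ * ν ^ (-((d : ℝ) - 1)) *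
          (Real.sqrt D'.det)⁻¹ *
          (Real.sqrt (Sig'⁻¹ + (ν ^ 2)⁻¹ • D'⁻¹).det)⁻¹ *
          Real.exp (-(1 / 2) * (x ⬝ᵥ (Sig⁻¹ *ᵥ x)) + (1 / 2) * (x ⬝ᵥ (S *ᵥ x))) := by
  have hs2 : ∀ j, s j ^ 2 ≠ 0 := fun j => by have := hs j; positivity
  have hSigi : Sig⁻¹ = Matrix.diagonal fun j => (s j ^ 2)⁻¹ := by
    rw [hSig]; exact inv_diag _ hs2
  have hsq : ∀ j, Real.sqrt (s j ^ 2) = s j := fun j => Real.sqrt_sq (hs j).le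
  -- determinant
  have hdet : ∀ l, Real.sqrt (Θ l).det = ∏ j, (s j)⁻¹ := by
    intro l
    have h1 : (1 - P * Lf l * Pᵀ).det = 1 := by
      rw [perm_conj σ P _ hP]
      have : (1 : Matrix (Fin d) (Fin d) ℝ) - (Lf l).submatrix σ.symm σ.symm =
          (1 - Lf l).submatrix σ.symm σ.symm := by
        rw [Matrix.submatrix_sub, Pi.sub_apply, Pi.sub_apply, Matrix.submatrix_one_equiv]
      rw [this, Matrix.det_submatrix_equiv_self, Matrix.det_of_isLowerTriangular]
      · simp [hLf]
      · intro i j hij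
        have hij' : i < j := hij
        simp [hLf, hij'.ne, hij'.not_gt]
    rw [hΘ, Matrix.det_mul, Matrix.det_mul, Matrix.det_transpose, h1, hSigi, Matrix.det_diagonal,
      one_mul, mul_one]
    have : ∏ j, (s j ^ 2)⁻¹ = (∏ j, (s j)⁻¹) ^ 2 := by
      rw [← Finset.prod_pow]; exact Finset.prod_congr rfl fun j _ => by rw [inv_pow]
    rw [this]
    exact Real.sqrt_sq (Finset.prod_nonneg fun j _ => inv_nonneg.2 (hs j).le)
  -- quadratic form
  have hquad : ∀ l, x ⬝ᵥ ((Θ l) *ᵥ x) = ∑ k, (s (σ k) ^ 2)⁻¹ *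
      (x (σ k) - ∑ p : {p : Fin d × Fin d // p.2 < p.1},
        if p.1.1 = k then x (σ p.1.2) * l p else 0) ^ 2 := by
    intro l
    rw [hΘ, hSigi, quad_conj, ← Equiv.sum_comp σ]
    refine Finset.sum_congr rfl fun k _ => ?_
    rw [perm_conj σ P _ hP, sum_row k (fun p => x (σ p.1.2) * l p), Matrix.sub_mulVec, Matrix.one_mulVec, Pi.sub_apply]
    congr 3
    simp only [Matrix.mulVec, dotProduct]
    rw [← Equiv.sum_comp σ]
    refine Finset.sum_congr rfl fun j _ => ?_
    simp only [Matrix.submatrix_apply, Equiv.symm_apply_apply, hLf]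
    split_ifs
    · ring
    · ring
  have hDk : ∀ k, D (σ k) (σ k) = ∑ p : {p : Fin d × Fin d // p.2 < p.1},
        if p.1.1 = k then x (σ p.1.2) ^ 2 else 0 := by
    intro k
    rw [hD, perm_conj σ P _ hP, Matrix.diagonal_apply_eq, sum_row k (fun p => x (σ p.1.2) ^ 2)]
    simp only [Matrix.mulVec, dotProduct]
    rw [← Equiv.sum_comp σ]
    refine Finset.sum_congr rfl fun j _ => ?_
    simp only [Matrix.submatrix_apply, Equiv.symm_apply_apply, hG]
    split_ifs
    · ring
    · ring
  have hi₀min : ∀ j : Fin d, ¬ j < i₀ := fun j h => by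
    have : (j : ℕ) < i₀ := h
    omega
  have hD0 : D (σ i₀) (σ i₀) = 0 := by
    rw [hDk, sum_row i₀ (fun p => x (σ p.1.2) ^ 2)]
    exact Finset.sum_eq_zero fun j _ => dif_neg (hi₀min j)
  have hDpos : ∀ j, j ≠ σ i₀ → 0 < D j j := by
    intro j hj
    obtain ⟨k, rfl⟩ := σ.surjective j
    have hk : k ≠ i₀ := fun h => hj (by rw [h])
    have hlt : i₀ < k := lt_of_le_of_ne (not_lt.1 (hi₀min k)) hk.symm
    rw [hDk]
    refine Finset.sum_pos' (fun p _ => by split_ifs <;> positivity) ⟨⟨(k, i₀), hlt⟩, Finset.mem_univ _, ?_⟩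
    have := hx (σ i₀)
    simp only [if_true]
    positivity
  have hDnn : ∀ j, 0 ≤ D j j := by
    intro j
    by_cases h : j = σ i₀
    · rw [h, hD0]
    · exact (hDpos j h).le
  -- integral
  have hgen := gg_gen ν hν (fun k => s (σ k) ^ 2) (fun k => by have := hs (σ k); positivity)
    (fun p : {p : Fin d × Fin d // p.2 < p.1} => p.1.1) (fun p => x (σ p.1.2)) (fun k => x (σ k))
  simp_rw [← hDk] at hgen
  rw [Equiv.prod_comp σ (fun j => gg (s j ^ 2 + ν ^ 2 * D j j) (x j))] at hgen
  have hint : ∀ l : ({p : Fin d × Fin d // p.2 < p.1} → ℝ),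
      (2 * π) ^ (-(d : ℝ) / 2) * Real.sqrt (Θ l).det *
          Real.exp (-(1 / 2) * (x ⬝ᵥ ((Θ l) *ᵥ x))) *
        ((2 * π * ν ^ 2) ^ (-((d : ℝ) * ((d : ℝ) - 1)) / 4) *
          Real.exp (-(∑ p, (l p) ^ 2) / (2 * ν ^ 2))) =
      ((2 * π) ^ (-(d : ℝ) / 2) * (2 * π * ν ^ 2) ^ (-((d : ℝ) * ((d : ℝ) - 1)) / 4)) *
        ((∏ k, gg (s (σ k) ^ 2) (x (σ k) - ∑ p : {p : Fin d × Fin d // p.2 < p.1},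
          if p.1.1 = k then x (σ p.1.2) * l p else 0)) *
          Real.exp (-(∑ p, (l p) ^ 2) / (2 * ν ^ 2))) := by
    intro l
    rw [prod_gg, hdet, hquad]
    simp_rw [hsq]
    rw [Equiv.prod_comp σ (fun j => (s j)⁻¹)]
    ring
  simp_rw [hint]
  rw [integral_const_mul, hgen]
  have hc : (2 * π * ν ^ 2) ^ (-((d : ℝ) * ((d : ℝ) - 1)) / 4) *
      Real.sqrt (2 * π * ν ^ 2) ^ (Fintype.card {p : Fin d × Fin d // p.2 < p.1}) = 1 := by
    have hp : 0 < 2 * π * ν ^ 2 := by positivity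
    have hcard : (Fintype.card {p : Fin d × Fin d // p.2 < p.1} : ℝ) * 2 = d * ((d : ℝ) - 1) := by
      have := card_row d
      have h1 : ((d - 1 : ℕ) : ℝ) = (d : ℝ) - 1 := by
        rw [Nat.cast_sub (by omega), Nat.cast_one]
      rw [← h1]
      exact_mod_cast this
    rw [Real.sqrt_eq_rpow, ← Real.rpow_natCast _ (Fintype.card _), ← Real.rpow_mul hp.le, ← Real.rpow_add hp, ← hcard]
    convert Real.rpow_zero (2 * π * ν ^ 2) using 2
    ring
  rw [mul_assoc, ← mul_assoc (_ ^ (-((d : ℝ) * ((d : ℝ) - 1)) / 4)), hc, one_mul, prod_gg]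
  have hexp : -(1 / 2) * (x ⬝ᵥ (Sig⁻¹ *ᵥ x)) + (1 / 2) * (x ⬝ᵥ (S *ᵥ x)) =
      -(1 / 2) * ∑ k, (s k ^ 2 + ν ^ 2 * D k k)⁻¹ * x k ^ 2 := by
    rw [hSigi, hS, quad_diag, quad_diag, Finset.mul_sum, Finset.mul_sum, Finset.mul_sum,
      ← Finset.sum_add_distrib]
    refine Finset.sum_congr rfl fun j _ => ?_
    have h1 := hs j
    have h2 := hDnn j
    have h3 : s j ^ 2 + ν ^ 2 * D j j ≠ 0 := by positivity
    field_simp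
    ring
  rw [hexp]
  have hprod : ∏ k, (Real.sqrt (s k ^ 2 + ν ^ 2 * D k k))⁻¹ =
      (∏ j, s j)⁻¹ * ν ^ (-((d : ℝ) - 1)) * (Real.sqrt D'.det)⁻¹ *
          (Real.sqrt (Sig'⁻¹ + (ν ^ 2)⁻¹ • D'⁻¹).det)⁻¹ := by
    have hDd : D' = Matrix.diagonal fun j : {j : Fin d // j ≠ σ i₀} => D j j := by
      rw [hD', hD]
      ext i j
      simp [Matrix.diagonal_apply, Subtype.ext_iff]
    have hSd : Sig' = Matrix.diagonal fun j : {j : Fin d // j ≠ σ i₀} => s j ^ 2 := by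
      rw [hSig', hSig]
      ext i j
      simp [Matrix.diagonal_apply, Subtype.ext_iff]
    have hsum : Sig'⁻¹ + (ν ^ 2)⁻¹ • D'⁻¹ =
        Matrix.diagonal fun j : {j : Fin d // j ≠ σ i₀} => (s j ^ 2)⁻¹ + (ν ^ 2)⁻¹ * (D j j)⁻¹ := by
      rw [hDd, hSd, inv_diag (fun j : {j : Fin d // j ≠ σ i₀} => s j ^ 2) (fun j => hs2 j),
        inv_diag (fun j : {j : Fin d // j ≠ σ i₀} => D j j) (fun j => (hDpos j j.2).ne'),
        ← Matrix.diagonal_smul, Matrix.diagonal_add]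
      rfl
    have hνp : ν ^ (-((d : ℝ) - 1)) = ∏ j : {j : Fin d // j ≠ σ i₀}, ν⁻¹ := by
      rw [Finset.prod_const, Finset.card_univ, Fintype.card_subtype_compl, Fintype.card_fin,
        Fintype.card_unique, inv_pow, ← Real.rpow_natCast, Nat.cast_sub (by omega), Nat.cast_one,
        Real.rpow_neg hν.le]
    rw [hsum, hDd, Matrix.det_diagonal, Matrix.det_diagonal, hνp,
      Real.sqrt_prod _ (fun j _ => hDnn _), Real.sqrt_prod _ (fun j _ => by
        have := hDnn j; positivity),
      ← Finset.prod_inv_distrib, ← Finset.prod_inv_distrib, ← Finset.prod_inv_distrib,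
      Fintype.prod_eq_mul_prod_subtype_ne _ (σ i₀), Fintype.prod_eq_mul_prod_subtype_ne _ (σ i₀),
      hD0, mul_zero, add_zero, hsq, mul_assoc, mul_assoc, mul_assoc,
      ← Finset.prod_mul_distrib, ← Finset.prod_mul_distrib, ← Finset.prod_mul_distrib]
    congr 1
    refine Finset.prod_congr rfl fun j _ => ?_
    have h1 := hs j
    have h2 := hDpos j j.2
    rw [← mul_inv, ← mul_inv, ← mul_inv]
    congr 1
    rw [Real.sqrt_eq_iff_mul_self_eq (by positivity) (by positivity)]
    have e1 := Real.mul_self_sqrt h2.le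
    have e2 := Real.mul_self_sqrt (show 0 ≤ (s j ^ 2)⁻¹ + (ν ^ 2)⁻¹ * (D j j)⁻¹ by positivity)
    symm
    calc _ = s j ^ 2 * ν ^ 2 * (√(D j j) * √(D j j)) * (√((s j ^ 2)⁻¹ + (ν ^ 2)⁻¹ * (D j j)⁻¹) * √((s j ^ 2)⁻¹ + (ν ^ 2)⁻¹ * (D j j)⁻¹)) := by ring
      _ = _ := by
        rw [e1, e2]
        field_simp
        ring
  rw [hprod]
  ring
end

section
/- Let d ≥ 1, let σ be a permutation of {1,…,d} with permutation matrix P ∈ ℝ^{d×d} (P_{ij} = 1 if i = σ(j), else 0), and let x ∈ ℝ^d with x_{σ(1)} ≠ 0. For l ∈ ℝ^{d(d−1)/2} let L(l) be the strictly lower-triangular matrix with those entries. Then the linear map φ : ℝ^{d(d−1)/2} → ℝ^d, φ(l) = P L(l) Pᵀ x, has range exactly the hyperplane {v ∈ ℝ^d : v_{σ(1)} = 0}. -/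
open Matrix

/-- For `P` the permutation matrix of a permutation `σ` and `x ∈ ℝ^d` with
`x_{σ(1)} ≠ 0`, the linear map `l ↦ P L(l) Pᵀ x` (where `L(l)` ranges over all
strictly lower-triangular matrices as `l` ranges over `ℝ^{d(d-1)/2}`) has range
exactly the hyperplane `{v : v_{σ(1)} = 0}`. -/
theorem stmt_9 (d : ℕ) (hd : 1 ≤ d) (σ : Equiv.Perm (Fin d))
    (P : Matrix (Fin d) (Fin d) ℝ)
    (hP : ∀ i j, P i j = if i = σ j then 1 else 0)
    (x : Fin d → ℝ) (hx : x (σ ⟨0, hd⟩) ≠ 0) :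
    {v : Fin d → ℝ | ∃ L : Matrix (Fin d) (Fin d) ℝ,
        (∀ i j : Fin d, ¬ j < i → L i j = 0) ∧ v = (P * L * Pᵀ) *ᵥ x} =
      {v : Fin d → ℝ | v (σ ⟨0, hd⟩) = 0} := by
  have key : ∀ (L : Matrix (Fin d) (Fin d) ℝ) (k : Fin d),
      ((P * L * Pᵀ) *ᵥ x) (σ k) = ∑ j, L k j * x (σ j) := by
    intro L k
    have h1 : Pᵀ *ᵥ x = fun j => x (σ j) := by
      funext j
      simp [Matrix.mulVec, dotProduct, hP]
    have h2 : ∀ w : Fin d → ℝ, (P *ᵥ w) (σ k) = w k := by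
      intro w
      simp [Matrix.mulVec, dotProduct, hP]
    rw [← Matrix.mulVec_mulVec, ← Matrix.mulVec_mulVec, h1, h2]
    rfl
  ext v
  simp only [Set.mem_ofPred_eq]
  constructor
  · rintro ⟨L, hL, rfl⟩
    rw [key]
    refine Finset.sum_eq_zero fun j _ => ?_
    rw [hL _ _ (by simp [Fin.lt_def]), zero_mul]
  · intro hv
    refine ⟨Matrix.of fun i j => if j = ⟨0, hd⟩ then v (σ i) / x (σ ⟨0, hd⟩) else 0, ?_, ?_⟩
    · intro i j hij
      by_cases hj : j = ⟨0, hd⟩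
      · have hi : i = ⟨0, hd⟩ := by
          subst hj
          apply Fin.ext
          simp only [Fin.lt_def] at hij
          simp only
          omega
        simp [hi, hv]
      · simp [hj]
    · funext m
      obtain ⟨k, rfl⟩ := σ.surjective m
      rw [key]
      simp [hx]
end
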